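/- Let A ∈ ℂ^{N×N} be positive real with δ := min{Re(vᴴAv) : ‖v‖ = 1} and ρ := min{Re(vᴴA⁻¹v) : ‖v‖ = 1}, let b ∈ ℂᴺ, and let μ be a nonnegative Borel measure on [0,∞) with ∫₀^∞ (1+t)⁻¹ dμ(t) < ∞, so that f(A)b := ∫₀^∞ (tI+A)⁻¹b dμ(t) is well defined. Let ε ∈ [0,1) and let S ∈ ℂ^{s×N} be an ε-subspace embedding for the Krylov space 𝒦_{m+1}(A,b). For each t ≥ 0 let x̃_m(t) ∈ 𝒦_m(A,b) satisfy ‖S(b−(tI+A)x̃_m(t))‖ ≤ ‖S(b−(tI+A)x)‖ for all x ∈ 𝒦_m(A,b), assume t ↦ x̃_m(t) is μ-Bochner integrable, and set f̃_m := ∫₀^∞ x̃_m(t) dμ(t). Then ‖A(f(A)b − f̃_m)‖ ≤ C₁ · C_ε · ‖b‖ · (sin β₀)^m, where C₁ = ‖A‖ · ∫₀^∞ (t+ρ‖A‖²)⁻¹ dμ(t), C_ε = √((1+ε)/(1−ε)), and sin β₀ = √(1 − (δ/‖A‖)²). -/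

import Mathlib

open Matrix MeasureTheory

noncomputable section

/-- `E n` is the Euclidean space `ℂⁿ`. -/
abbrev E (n : ℕ) : Type := EuclideanSpace ℂ (Fin n)

/-- Action of a (rectangular) matrix on a Euclidean vector. -/
def mulE {p q : ℕ} (M : Matrix (Fin p) (Fin q) ℂ) (v : E q) : E p :=
  Matrix.toEuclideanLin M v

/-- Spectral (operator 2-) norm of a (rectangular) matrix. -/
def opNorm {p q : ℕ} (M : Matrix (Fin p) (Fin q) ℂ) : ℝ :=
  ‖LinearMap.toContinuousLinearMap (Matrix.toEuclideanLin M)‖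

/-- The `m`-th Krylov space `𝒦_m(A,b) = span{b, Ab, …, A^{m-1}b}`. -/
def Krylov {N : ℕ} (A : Matrix (Fin N) (Fin N) ℂ) (b : E N) (m : ℕ) :
    Submodule ℂ (E N) :=
  Submodule.span ℂ {v | ∃ j < m, v = mulE (A ^ j) b}

/-- `S` is an `ε`-subspace embedding for the subspace `𝒱`. -/
def IsSubspaceEmbedding {s N : ℕ} (S : Matrix (Fin s) (Fin N) ℂ) (ε : ℝ)
    (𝒱 : Submodule ℂ (E N)) : Prop :=
  ∀ v ∈ 𝒱, (1 - ε) * ‖v‖ ^ 2 ≤ ‖mulE S v‖ ^ 2 ∧ ‖mulE S v‖ ^ 2 ≤ (1 + ε) * ‖v‖ ^ 2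

/-- A matrix is positive real if `Re(vᴴAv) > 0` for all nonzero `v`. -/
def IsPositiveReal {N : ℕ} (A : Matrix (Fin N) (Fin N) ℂ) : Prop :=
  ∀ v : E N, v ≠ 0 → 0 < (inner ℂ v (mulE A v) : ℂ).re

/-!
`𝒦ₘ(t + A, b) = 𝒦ₘ(A, b)` for every shift `t`, so one Krylov space serves all the systems
`(t + A) x = b`. Coercivity with constant `δ` makes a Richardson step for `A` contract the residual
by `√(1 - (δ / ‖A‖)²)`, and the shift only helps, because `δ / ‖A‖ ≤ (t + δ) / ‖t + A‖`. As `S`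
nearly preserves norms on `𝒦ₘ₊₁(A, b)`, which contains all residuals, minimizing the sketched
residual loses at most the factor `√((1 + ε) / (1 - ε))`. Coercivity of `A⁻¹` with constant `ρ`
turns the residual `r` at `t` into an error `‖A (t + A)⁻¹ r‖ ≤ ‖A‖ / (t + ρ ‖A‖²) * ‖r‖`, and
integrating this bound against `μ` gives the estimate.
-/

section Krylov

section Semiring

variable {R V : Type*} [Semiring R] [AddCommMonoid V] [Module R V] (T : Module.End R V) (x : V)

/-- The `m`-th Krylov space `span {x, T x, …, T ^ (m - 1) x}` of an endomorphism: the notion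
`Krylov` for spaces that need not be coordinatized. -/
def krylovSubspace (m : ℕ) : Submodule R V :=
  Submodule.span R {v | ∃ j < m, v = (T ^ j) x}

theorem pow_apply_mem_krylovSubspace {j m : ℕ} (hj : j < m) :
    (T ^ j) x ∈ krylovSubspace T x m :=
  Submodule.subset_span ⟨j, hj, rfl⟩

theorem krylovSubspace_mono : Monotone (krylovSubspace T x) := by
  refine fun m n hmn ↦ Submodule.span_mono ?_
  rintro v ⟨j, hj, rfl⟩
  exact ⟨j, hj.trans_le hmn, rfl⟩

variable {T x}

theorem apply_mem_krylovSubspace_succ {v : V} {m : ℕ} (hv : v ∈ krylovSubspace T x m) :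
    T v ∈ krylovSubspace T x (m + 1) := by
  suffices krylovSubspace T x m ≤ (krylovSubspace T x (m + 1)).comap T from this hv
  refine Submodule.span_le.mpr ?_
  rintro v ⟨j, hj, rfl⟩
  rw [SetLike.mem_coe, Submodule.mem_comap, ← Module.End.mul_apply, ← pow_succ']
  exact pow_apply_mem_krylovSubspace T x (by lia)

end Semiring

theorem sub_apply_mem_krylovSubspace_succ {R V : Type*} [Ring R] [AddCommGroup V] [Module R V]
    {T : Module.End R V} {b v : V} {m : ℕ} (hv : v ∈ krylovSubspace T b m) :
    b - T v ∈ krylovSubspace T b (m + 1) :=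
  sub_mem (pow_apply_mem_krylovSubspace T b m.succ_pos) (apply_mem_krylovSubspace_succ hv)

section Shift

variable {R V : Type*} [CommRing R] [AddCommGroup V] [Module R V] (T : Module.End R V) (x : V)

theorem smul_one_add_pow_apply_mem_krylovSubspace (t : R) (j : ℕ) :
    ((t • 1 + T) ^ j) x ∈ krylovSubspace T x (j + 1) := by
  induction j with
  | zero => exact pow_apply_mem_krylovSubspace T x one_pos
  | succ j ih =>
    rw [pow_succ', Module.End.mul_apply]
    exact add_mem (Submodule.smul_mem _ t (krylovSubspace_mono T x (j + 1).le_succ ih))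
      (apply_mem_krylovSubspace_succ ih)

theorem krylovSubspace_smul_one_add_le (t : R) (m : ℕ) :
    krylovSubspace (t • 1 + T) x m ≤ krylovSubspace T x m := by
  refine Submodule.span_le.mpr ?_
  rintro v ⟨j, hj, rfl⟩
  exact krylovSubspace_mono T x hj (smul_one_add_pow_apply_mem_krylovSubspace T x t j)

theorem krylovSubspace_smul_one_add (t : R) (m : ℕ) :
    krylovSubspace (t • 1 + T) x m = krylovSubspace T x m := by
  refine (krylovSubspace_smul_one_add_le T x t m).antisymm ?_
  have hT : -t • 1 + (t • 1 + T) = T := by rw [neg_smul, neg_add_cancel_left]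
  have hle := krylovSubspace_smul_one_add_le (t • 1 + T) x (-t) m
  rwa [hT] at hle

end Shift

-- The approximants are the Richardson iterates `x₀ = 0`, `xₘ₊₁ = xₘ + a • (b - T xₘ)`.
theorem exists_mem_krylovSubspace_norm_sub_le {R V : Type*} [Ring R] [SeminormedAddCommGroup V]
    [Module R V] {T : Module.End R V} {a : R} {q : ℝ} (hq : 0 ≤ q)
    (hT : ∀ v, ‖v - a • T v‖ ≤ q * ‖v‖) (b : V) (m : ℕ) :
    ∃ x ∈ krylovSubspace T b m, ‖b - T x‖ ≤ q ^ m * ‖b‖ := by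
  induction m with
  | zero => exact ⟨0, zero_mem _, by simp⟩
  | succ m ih =>
    obtain ⟨x, hx, hxb⟩ := ih
    refine ⟨x + a • (b - T x), add_mem (krylovSubspace_mono T b m.le_succ hx)
      (Submodule.smul_mem _ a (sub_apply_mem_krylovSubspace_succ hx)), ?_⟩
    calc ‖b - T (x + a • (b - T x))‖ = ‖(b - T x) - a • T (b - T x)‖ := by
          rw [map_add, map_smul, sub_sub]
      _ ≤ q * ‖b - T x‖ := hT _
      _ ≤ q * (q ^ m * ‖b‖) := by gcongr
      _ = q ^ (m + 1) * ‖b‖ := by ring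

end Krylov

theorem norm_le_sqrt_div_mul_norm_of_norm_le {V F : Type*} [SeminormedAddGroup V]
    [SeminormedAddGroup F] {S : V → F} {c₁ c₂ : ℝ} {v w : V} (hc₁ : 0 < c₁)
    (hv : c₁ * ‖v‖ ^ 2 ≤ ‖S v‖ ^ 2) (hw : ‖S w‖ ^ 2 ≤ c₂ * ‖w‖ ^ 2) (hvw : ‖S v‖ ≤ ‖S w‖) :
    ‖v‖ ≤ √(c₂ / c₁) * ‖w‖ := by
  rw [← Real.sqrt_sq (norm_nonneg w), ← Real.sqrt_mul' _ (sq_nonneg _)]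
  refine Real.le_sqrt_of_sq_le ?_
  rw [div_mul_eq_mul_div, le_div_iff₀' hc₁]
  calc c₁ * ‖v‖ ^ 2 ≤ ‖S v‖ ^ 2 := hv
    _ ≤ ‖S w‖ ^ 2 := by gcongr
    _ ≤ c₂ * ‖w‖ ^ 2 := hw

section Coercive

open RCLike
open scoped InnerProductSpace Ring

variable {𝕜 H : Type*} [RCLike 𝕜] [NormedAddCommGroup H] [InnerProductSpace 𝕜 H]
  {A : H →L[𝕜] H} {δ ρ t : ℝ}

/-- `A` is coercive with constant `δ`: `δ` bounds the real part of the numerical range of `A` from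
below. No sign is imposed on `δ`. -/
def IsCoerciveWith (δ : ℝ) (A : H →L[𝕜] H) : Prop :=
  ∀ v, δ * ‖v‖ ^ 2 ≤ re ⟪v, A v⟫_𝕜

/-- `A` is cocoercive with constant `ρ`. For invertible `A` this is coercivity of `A⁻¹`, written
without the inverse. -/
def IsCocoerciveWith (ρ : ℝ) (A : H →L[𝕜] H) : Prop :=
  ∀ v, ρ * ‖A v‖ ^ 2 ≤ re ⟪v, A v⟫_𝕜

theorem isCoerciveWith_of_forall_norm_eq_one (h : ∀ v, ‖v‖ = 1 → δ ≤ re ⟪v, A v⟫_𝕜) :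
    IsCoerciveWith δ A := by
  intro v
  rcases eq_or_ne v 0 with rfl | hv
  · simp
  have hv' : ‖v‖ ≠ 0 := norm_ne_zero_iff.mpr hv
  have hunit : δ ≤ ‖v‖⁻¹ * (‖v‖⁻¹ * re ⟪v, A v⟫_𝕜) := by
    simpa only [map_smul, inner_smul_left, inner_smul_right, conj_ofReal, re_ofReal_mul]
      using h (((‖v‖⁻¹ : ℝ) : 𝕜) • v) (by simp [norm_smul, hv'])
  calc δ * ‖v‖ ^ 2 ≤ ‖v‖⁻¹ * (‖v‖⁻¹ * re ⟪v, A v⟫_𝕜) * ‖v‖ ^ 2 := by gcongr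
    _ = re ⟪v, A v⟫_𝕜 := by field_simp

namespace IsCoerciveWith

theorem mul_norm_le_norm_apply (hA : IsCoerciveWith δ A) (v : H) : δ * ‖v‖ ≤ ‖A v‖ := by
  rcases eq_or_ne v 0 with rfl | hv
  · simp
  refine le_of_mul_le_mul_left ?_ (norm_pos_iff.mpr hv)
  calc ‖v‖ * (δ * ‖v‖) = δ * ‖v‖ ^ 2 := by ring
    _ ≤ re ⟪v, A v⟫_𝕜 := hA v
    _ ≤ ‖v‖ * ‖A v‖ := re_inner_le_norm v (A v)

theorem le_opNorm [Nontrivial H] (hA : IsCoerciveWith δ A) : δ ≤ ‖A‖ := by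
  obtain ⟨v, hv⟩ := exists_ne (0 : H)
  exact le_of_mul_le_mul_right ((hA.mul_norm_le_norm_apply v).trans (A.le_opNorm v))
    (norm_pos_iff.mpr hv)

theorem isUnit [CompleteSpace H] (hA : IsCoerciveWith δ A) (hδ : 0 < δ) : IsUnit A := by
  refine A.isUnit_of_forall_le_norm_inner_map (c := ⟨δ, hδ.le⟩) hδ fun v ↦ ?_
  calc ‖v‖ ^ 2 * δ ≤ re ⟪v, A v⟫_𝕜 := (mul_comm _ _).trans_le (hA v)
    _ = re ⟪A v, v⟫_𝕜 := inner_re_symm _ _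
    _ ≤ ‖⟪A v, v⟫_𝕜‖ := re_le_norm _

theorem smul_one_add (hA : IsCoerciveWith δ A) (t : ℝ) :
    IsCoerciveWith (t + δ) ((t : 𝕜) • 1 + A) := by
  intro v
  calc (t + δ) * ‖v‖ ^ 2 ≤ t * ‖v‖ ^ 2 + re ⟪v, A v⟫_𝕜 := by linarith [hA v]
    _ = re ⟪v, ((t : 𝕜) • 1 + A) v⟫_𝕜 := by simp [inner_add_right, inner_smul_right]

theorem norm_sub_smul_apply_le (hA : IsCoerciveWith δ A) (hδ : 0 ≤ δ) (v : H) :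
    ‖v - ((δ / ‖A‖ ^ 2 : ℝ) : 𝕜) • A v‖ ≤ √(1 - (δ / ‖A‖) ^ 2) * ‖v‖ := by
  set a := δ / ‖A‖ ^ 2
  have : 0 ≤ a := by positivity
  have haδ : a * δ = (δ / ‖A‖) ^ 2 := by ring
  have haA : a ^ 2 * ‖A‖ ^ 2 = (δ / ‖A‖) ^ 2 := by
    rcases eq_or_ne ‖A‖ 0 with hA0 | hA0
    · simp [hA0]
    · simp only [a]; field_simp
  rw [← Real.sqrt_sq (norm_nonneg v), ← Real.sqrt_mul' _ (sq_nonneg _)]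
  refine Real.le_sqrt_of_sq_le ?_
  calc ‖v - (a : 𝕜) • A v‖ ^ 2
      = ‖v‖ ^ 2 - 2 * (a * re ⟪v, A v⟫_𝕜) + a ^ 2 * ‖A v‖ ^ 2 := by
        rw [norm_sub_sq (𝕜 := 𝕜), inner_smul_right, re_ofReal_mul, norm_smul, norm_ofReal, mul_pow,
          sq_abs]
    _ ≤ ‖v‖ ^ 2 - 2 * (a * (δ * ‖v‖ ^ 2)) + a ^ 2 * (‖A‖ * ‖v‖) ^ 2 := by
        gcongr
        · exact hA v
        · exact A.le_opNorm v
    _ = (1 - (δ / ‖A‖) ^ 2) * ‖v‖ ^ 2 := by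
        linear_combination (-2 * ‖v‖ ^ 2) * haδ + ‖v‖ ^ 2 * haA

theorem exists_mem_krylovSubspace_norm_sub_le (hA : IsCoerciveWith δ A) (hδ : 0 ≤ δ) (b : H)
    (m : ℕ) : ∃ x ∈ krylovSubspace (A : Module.End 𝕜 H) b m,
      ‖b - A x‖ ≤ √(1 - (δ / ‖A‖) ^ 2) ^ m * ‖b‖ :=
  _root_.exists_mem_krylovSubspace_norm_sub_le (T := (A : Module.End 𝕜 H)) (Real.sqrt_nonneg _)
    (hA.norm_sub_smul_apply_le hδ) b m

theorem div_opNorm_le_div_opNorm_smul_one_add [Nontrivial H] (hA : IsCoerciveWith δ A)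
    (hδ : 0 < δ) (ht : 0 ≤ t) : δ / ‖A‖ ≤ (t + δ) / ‖(t : 𝕜) • 1 + A‖ := by
  have hδA : δ ≤ ‖A‖ := hA.le_opNorm
  have hshift : 0 < ‖(t : 𝕜) • 1 + A‖ :=
    (add_pos_of_nonneg_of_pos ht hδ).trans_le (hA.smul_one_add t).le_opNorm
  calc δ / ‖A‖ ≤ (t + δ) / (t + ‖A‖) := by
        rw [div_le_div_iff₀ (by linarith) (by linarith)]
        linarith [mul_le_mul_of_nonneg_left hδA ht]
    _ ≤ (t + δ) / ‖(t : 𝕜) • 1 + A‖ := by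
        gcongr
        calc ‖(t : 𝕜) • 1 + A‖ ≤ ‖(t : 𝕜) • (1 : H →L[𝕜] H)‖ + ‖A‖ := norm_add_le _ _
          _ = t + ‖A‖ := by rw [norm_smul, norm_one, mul_one, norm_of_nonneg ht]

end IsCoerciveWith

namespace IsCocoerciveWith

theorem of_inverse (hA : IsUnit A) (hρ : IsCoerciveWith ρ A⁻¹ʳ) : IsCocoerciveWith ρ A := by
  intro v
  have hv : A⁻¹ʳ (A v) = v := DFunLike.congr_fun (Ring.inverse_mul_cancel A hA) v
  simpa only [hv, inner_re_symm (A v)] using hρ (A v)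

theorem mul_norm_apply_le (hA : IsCocoerciveWith ρ A) (v : H) : ρ * ‖A v‖ ≤ ‖v‖ := by
  rcases eq_or_ne (A v) 0 with hv | hv
  · simp [hv]
  refine le_of_mul_le_mul_right ?_ (norm_pos_iff.mpr hv)
  calc ρ * ‖A v‖ * ‖A v‖ = ρ * ‖A v‖ ^ 2 := by ring
    _ ≤ re ⟪v, A v⟫_𝕜 := hA v
    _ ≤ ‖v‖ * ‖A v‖ := re_inner_le_norm v (A v)

theorem mul_opNorm_le_one (hA : IsCocoerciveWith ρ A) : ρ * ‖A‖ ≤ 1 := by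
  rcases le_or_gt ρ 0 with hρ | hρ
  · exact (mul_nonpos_of_nonpos_of_nonneg hρ (norm_nonneg A)).trans zero_le_one
  rw [← le_div_iff₀' hρ, one_div]
  refine A.opNorm_le_bound (inv_nonneg.mpr hρ.le) fun v ↦ ?_
  rw [inv_mul_eq_div, le_div_iff₀' hρ]
  exact hA.mul_norm_apply_le v

-- Squared, this compares `t² ‖A v‖²`, `2 t ρ ‖A‖² ‖A v‖²` and `(ρ ‖A‖)² ‖A‖² ‖A v‖²` with the three
-- terms of `‖A‖² ‖t v + A v‖²` one by one.
theorem add_mul_norm_apply_le (hA : IsCocoerciveWith ρ A) (hρ : 0 ≤ ρ) (ht : 0 ≤ t) (v : H) :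
    (t + ρ * ‖A‖ ^ 2) * ‖A v‖ ≤ ‖A‖ * ‖((t : 𝕜) • 1 + A) v‖ := by
  refine le_of_sq_le_sq ?_ (by positivity)
  calc ((t + ρ * ‖A‖ ^ 2) * ‖A v‖) ^ 2
      = t ^ 2 * ‖A v‖ ^ 2 + 2 * t * ‖A‖ ^ 2 * (ρ * ‖A v‖ ^ 2)
          + (ρ * ‖A‖) ^ 2 * (‖A‖ ^ 2 * ‖A v‖ ^ 2) := by ring
    _ ≤ t ^ 2 * (‖A‖ * ‖v‖) ^ 2 + 2 * t * ‖A‖ ^ 2 * re ⟪v, A v⟫_𝕜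
          + 1 ^ 2 * (‖A‖ ^ 2 * ‖A v‖ ^ 2) := by
        gcongr
        · exact A.le_opNorm v
        · exact hA v
        · exact hA.mul_opNorm_le_one
    _ = ‖A‖ ^ 2 * (‖(t : 𝕜) • v‖ ^ 2 + 2 * re ⟪(t : 𝕜) • v, A v⟫_𝕜 + ‖A v‖ ^ 2) := by
        rw [norm_smul, norm_of_nonneg ht, inner_smul_left, conj_ofReal, re_ofReal_mul]
        ring
    _ = (‖A‖ * ‖((t : 𝕜) • 1 + A) v‖) ^ 2 := by
        rw [mul_pow, ← norm_add_sq]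
        simp

end IsCocoerciveWith

section SketchedResidual

variable {F : Type*} [SeminormedAddGroup F] {S : H → F} {c₁ c₂ : ℝ} {m : ℕ} {b x : H}

theorem IsCoerciveWith.norm_sub_apply_le_of_isMinOn (hA : IsCoerciveWith δ A) (hδ : 0 ≤ δ)
    (hc₁ : 0 < c₁)
    (hS : ∀ v ∈ krylovSubspace (A : Module.End 𝕜 H) b (m + 1),
      c₁ * ‖v‖ ^ 2 ≤ ‖S v‖ ^ 2 ∧ ‖S v‖ ^ 2 ≤ c₂ * ‖v‖ ^ 2)
    (hx : x ∈ krylovSubspace (A : Module.End 𝕜 H) b m)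
    (hmin : IsMinOn (fun y ↦ ‖S (b - A y)‖) (krylovSubspace (A : Module.End 𝕜 H) b m) x) :
    ‖b - A x‖ ≤ √(c₂ / c₁) * (√(1 - (δ / ‖A‖) ^ 2) ^ m * ‖b‖) := by
  obtain ⟨y, hy, hyb⟩ := hA.exists_mem_krylovSubspace_norm_sub_le hδ b m
  calc ‖b - A x‖ ≤ √(c₂ / c₁) * ‖b - A y‖ :=
        norm_le_sqrt_div_mul_norm_of_norm_le hc₁ (hS _ (sub_apply_mem_krylovSubspace_succ hx)).1
          (hS _ (sub_apply_mem_krylovSubspace_succ hy)).2 (hmin hy)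
    _ ≤ √(c₂ / c₁) * (√(1 - (δ / ‖A‖) ^ 2) ^ m * ‖b‖) := by gcongr

theorem IsCoerciveWith.norm_sub_smul_one_add_apply_le_of_isMinOn [Nontrivial H]
    (hA : IsCoerciveWith δ A) (hδ : 0 < δ) (ht : 0 ≤ t) (hc₁ : 0 < c₁)
    (hS : ∀ v ∈ krylovSubspace (A : Module.End 𝕜 H) b (m + 1),
      c₁ * ‖v‖ ^ 2 ≤ ‖S v‖ ^ 2 ∧ ‖S v‖ ^ 2 ≤ c₂ * ‖v‖ ^ 2)
    (hx : x ∈ krylovSubspace (A : Module.End 𝕜 H) b m)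
    (hmin : IsMinOn (fun y ↦ ‖S (b - ((t : 𝕜) • 1 + A) y)‖)
      (krylovSubspace (A : Module.End 𝕜 H) b m) x) :
    ‖b - ((t : 𝕜) • 1 + A) x‖ ≤ √(c₂ / c₁) * (√(1 - (δ / ‖A‖) ^ 2) ^ m * ‖b‖) := by
  have hK (n : ℕ) : krylovSubspace (((t : 𝕜) • 1 + A : H →L[𝕜] H) : Module.End 𝕜 H) b n =
      krylovSubspace (A : Module.End 𝕜 H) b n :=
    krylovSubspace_smul_one_add (A : Module.End 𝕜 H) b (t : 𝕜) n
  simp only [← hK] at hS hx hmin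
  refine ((hA.smul_one_add t).norm_sub_apply_le_of_isMinOn (by positivity) hc₁ hS hx hmin).trans ?_
  have hratio : δ / ‖A‖ ≤ (t + δ) / ‖(t : 𝕜) • 1 + A‖ :=
    hA.div_opNorm_le_div_opNorm_smul_one_add hδ ht
  gcongr √(c₂ / c₁) * (√(1 - ?_ ^ 2) ^ m * ‖b‖)

end SketchedResidual

section Stieltjes

open Set

variable {μ : Measure ℝ}

theorem integrableOn_inv_add_const {c : ℝ} (hc : 0 < c)
    (hμ : IntegrableOn (fun t ↦ (1 + t)⁻¹) (Ici 0) μ) :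
    IntegrableOn (fun t ↦ (t + c)⁻¹) (Ici 0) μ := by
  refine Integrable.mono' (hμ.const_mul (1 + c⁻¹)) (by fun_prop) ?_
  filter_upwards [ae_restrict_mem measurableSet_Ici] with t (ht : 0 ≤ t)
  rw [Real.norm_of_nonneg (by positivity), ← div_eq_mul_inv,
    inv_le_comm₀ (by positivity) (by positivity), inv_div, div_le_iff₀ (by positivity)]
  have hcc : c * c⁻¹ = 1 := mul_inv_cancel₀ hc.ne'
  nlinarith [mul_nonneg ht (inv_nonneg.mpr hc.le)]

variable [CompleteSpace H]

theorem IsCoerciveWith.smul_one_add_apply_inverse (hA : IsCoerciveWith δ A) (hδ : 0 < δ)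
    (ht : 0 ≤ t) (b : H) :
    ((t : 𝕜) • 1 + A) (((t : 𝕜) • 1 + A)⁻¹ʳ b) = b :=
  DFunLike.congr_fun
    (Ring.mul_inverse_cancel _ ((hA.smul_one_add t).isUnit (by positivity))) b

theorem IsCoerciveWith.continuousOn_inverse_smul_one_add (hA : IsCoerciveWith δ A) (hδ : 0 < δ) :
    ContinuousOn (fun t : ℝ ↦ ((t : 𝕜) • 1 + A)⁻¹ʳ) (Ici 0) := by
  intro t (ht : 0 ≤ t)
  obtain ⟨u, hu⟩ := (hA.smul_one_add t).isUnit (by positivity)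
  have hcont : Continuous fun t : ℝ ↦ (t : 𝕜) • (1 : H →L[𝕜] H) + A := by fun_prop
  have hinv := NormedRing.inverse_continuousAt u
  rw [hu] at hinv
  exact (hinv.comp (f := fun t : ℝ ↦ (t : 𝕜) • 1 + A) hcont.continuousAt).continuousWithinAt

theorem IsCoerciveWith.integrableOn_inverse_smul_one_add_apply (hA : IsCoerciveWith δ A)
    (hδ : 0 < δ) (hμ : IntegrableOn (fun t ↦ (1 + t)⁻¹) (Ici 0) μ) (b : H) :
    IntegrableOn (fun t : ℝ ↦ ((t : 𝕜) • 1 + A)⁻¹ʳ b) (Ici 0) μ := by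
  refine Integrable.mono' ((integrableOn_inv_add_const hδ hμ).mul_const ‖b‖)
    (((hA.continuousOn_inverse_smul_one_add hδ).clm_apply
      continuousOn_const).aestronglyMeasurable measurableSet_Ici) ?_
  filter_upwards [ae_restrict_mem measurableSet_Ici] with t (ht : 0 ≤ t)
  have hbound := (hA.smul_one_add t).mul_norm_le_norm_apply (((t : 𝕜) • 1 + A)⁻¹ʳ b)
  rw [hA.smul_one_add_apply_inverse hδ ht] at hbound
  rwa [inv_mul_eq_div, le_div_iff₀' (by positivity)]

theorem IsCoerciveWith.norm_apply_inverse_sub_le (hA : IsCoerciveWith δ A) (hδ : 0 < δ)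
    (hA' : IsCocoerciveWith ρ A) (hρ : 0 ≤ ρ) (ht : 0 ≤ t) (hρA : 0 < t + ρ * ‖A‖ ^ 2) (b x : H) :
    ‖A (((t : 𝕜) • 1 + A)⁻¹ʳ b - x)‖ ≤
      (t + ρ * ‖A‖ ^ 2)⁻¹ * (‖A‖ * ‖b - ((t : 𝕜) • 1 + A) x‖) := by
  have h := hA'.add_mul_norm_apply_le hρ ht (((t : 𝕜) • 1 + A)⁻¹ʳ b - x)
  rw [map_sub ((t : 𝕜) • 1 + A), hA.smul_one_add_apply_inverse hδ ht] at h
  rwa [inv_mul_eq_div, le_div_iff₀' hρA]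

theorem sketched_fAb_stmt0_general [NormedSpace ℝ H] {F : Type*} [SeminormedAddGroup F] {m : ℕ}
    {c₁ c₂ : ℝ} {b : H} {S : H → F} {x : ℝ → H} (hA : IsCoerciveWith δ A) (hδ : 0 < δ)
    (hA' : IsCocoerciveWith ρ A) (hρ : 0 < ρ)
    (hμ : IntegrableOn (fun t ↦ (1 + t)⁻¹) (Ici 0) μ) (hc₁ : 0 < c₁)
    (hS : ∀ v ∈ krylovSubspace (A : Module.End 𝕜 H) b (m + 1),
      c₁ * ‖v‖ ^ 2 ≤ ‖S v‖ ^ 2 ∧ ‖S v‖ ^ 2 ≤ c₂ * ‖v‖ ^ 2)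
    (hx_mem : ∀ t, 0 ≤ t → x t ∈ krylovSubspace (A : Module.End 𝕜 H) b m)
    (hx_min : ∀ t : ℝ, 0 ≤ t → IsMinOn (fun y ↦ ‖S (b - ((t : 𝕜) • 1 + A) y)‖)
      (krylovSubspace (A : Module.End 𝕜 H) b m) (x t))
    (hx_int : IntegrableOn x (Ici 0) μ) :
    ‖A ((∫ t in Ici (0 : ℝ), ((t : 𝕜) • 1 + A)⁻¹ʳ b ∂μ) - ∫ t in Ici (0 : ℝ), x t ∂μ)‖ ≤
      (‖A‖ * ∫ t in Ici (0 : ℝ), (t + ρ * ‖A‖ ^ 2)⁻¹ ∂μ) * √(c₂ / c₁) * ‖b‖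
        * √(1 - (δ / ‖A‖) ^ 2) ^ m := by
  rcases subsingleton_or_nontrivial H with _ | _
  · simp [Subsingleton.elim A 0]
  have hAb := hA.integrableOn_inverse_smul_one_add_apply hδ hμ b
  have hρA : 0 < ρ * ‖A‖ ^ 2 := mul_pos hρ (pow_pos (hδ.trans_le hA.le_opNorm) 2)
  calc ‖A ((∫ t in Ici (0 : ℝ), ((t : 𝕜) • 1 + A)⁻¹ʳ b ∂μ) - ∫ t in Ici (0 : ℝ), x t ∂μ)‖
      = ‖∫ t in Ici (0 : ℝ), A (((t : 𝕜) • 1 + A)⁻¹ʳ b - x t) ∂μ‖ := by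
        rw [← integral_sub hAb hx_int]
        exact congrArg _ (A.integral_comp_comm (hAb.sub hx_int)).symm
    _ ≤ ∫ t in Ici (0 : ℝ), (t + ρ * ‖A‖ ^ 2)⁻¹
          * (‖A‖ * (√(c₂ / c₁) * (√(1 - (δ / ‖A‖) ^ 2) ^ m * ‖b‖))) ∂μ := by
        refine norm_integral_le_of_norm_le ((integrableOn_inv_add_const hρA hμ).mul_const _) ?_
        filter_upwards [ae_restrict_mem measurableSet_Ici] with t (ht : 0 ≤ t)
        refine (hA.norm_apply_inverse_sub_le hδ hA' hρ.le ht (by positivity) b (x t)).trans ?_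
        gcongr
        exact hA.norm_sub_smul_one_add_apply_le_of_isMinOn hδ ht hc₁ hS (hx_mem t ht) (hx_min t ht)
    _ = (‖A‖ * ∫ t in Ici (0 : ℝ), (t + ρ * ‖A‖ ^ 2)⁻¹ ∂μ) * √(c₂ / c₁) * ‖b‖
          * √(1 - (δ / ‖A‖) ^ 2) ^ m := by
        rw [integral_mul_const]
        ring

end Stieltjes

end Coercive

section Matrix

open scoped Ring

variable {N : ℕ} {A : Matrix (Fin N) (Fin N) ℂ}

theorem mulE_eq_toEuclideanCLM (A : Matrix (Fin N) (Fin N) ℂ) (v : E N) :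
    mulE A v = toEuclideanCLM (n := Fin N) (𝕜 := ℂ) A v := rfl

theorem opNorm_eq_norm_toEuclideanCLM (A : Matrix (Fin N) (Fin N) ℂ) :
    opNorm A = ‖toEuclideanCLM (n := Fin N) (𝕜 := ℂ) A‖ := rfl

theorem Krylov_eq_krylovSubspace (A : Matrix (Fin N) (Fin N) ℂ) (b : E N) (m : ℕ) :
    Krylov A b m = krylovSubspace
      (toEuclideanCLM (n := Fin N) (𝕜 := ℂ) A : Module.End ℂ (E N)) b m := by
  simp only [Krylov, krylovSubspace, mulE, toLpLin_pow, coe_toEuclideanCLM_eq_toEuclideanLin]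

theorem toEuclideanCLM_inv {n 𝕜 : Type*} [Fintype n] [DecidableEq n] [RCLike 𝕜]
    (M : Matrix n n 𝕜) :
    toEuclideanCLM (n := n) (𝕜 := 𝕜) M⁻¹ = (toEuclideanCLM (n := n) (𝕜 := 𝕜) M)⁻¹ʳ := by
  rw [nonsing_inv_eq_ringInverse]
  by_cases hM : IsUnit M
  · obtain ⟨u, rfl⟩ := hM
    rw [Ring.inverse_unit]
    exact (Ring.inverse_unit
      (Units.map (MonoidHomClass.toMonoidHom (toEuclideanCLM (n := n) (𝕜 := 𝕜))) u)).symm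
  · have hM' : ¬IsUnit (toEuclideanCLM (n := n) (𝕜 := 𝕜) M) := by rwa [MulEquiv.isUnit_map]
    rw [Ring.inverse_non_unit _ hM, Ring.inverse_non_unit _ hM', map_zero]

namespace IsPositiveReal

theorem isUnit (hA : IsPositiveReal A) : IsUnit A := by
  rw [isUnit_iff_isUnit_det, isUnit_iff_ne_zero]
  intro hdet
  obtain ⟨v, hv, hAv⟩ := exists_mulVec_eq_zero_iff.mpr hdet
  simpa [mulE, toLpLin_apply, hAv] using hA (WithLp.toLp 2 v) (by simpa using hv)

theorem inv (hA : IsPositiveReal A) : IsPositiveReal A⁻¹ := by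
  intro v hv
  have hmul : mulE A (mulE A⁻¹ v) = v := by
    simp [mulE, toLpLin_apply,
      mul_nonsing_inv A ((isUnit_iff_isUnit_det A).mp hA.isUnit)]
  have hne : mulE A⁻¹ v ≠ 0 := by
    intro h
    rw [h] at hmul
    exact hv (by simpa [mulE] using hmul.symm)
  calc 0 < (inner ℂ (mulE A⁻¹ v) (mulE A (mulE A⁻¹ v)) : ℂ).re := hA _ hne
    _ = (inner ℂ v (mulE A⁻¹ v) : ℂ).re := by rw [hmul]; exact inner_re_symm (𝕜 := ℂ) _ _

theorem pos_of_isLeast {δ : ℝ} (hA : IsPositiveReal A)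
    (hδ : IsLeast {r : ℝ | ∃ v : E N, ‖v‖ = 1 ∧ r = (inner ℂ v (mulE A v) : ℂ).re} δ) :
    0 < δ := by
  obtain ⟨v, hv, rfl⟩ := hδ.1
  exact hA v (norm_ne_zero_iff.mp (hv.trans_ne one_ne_zero))

end IsPositiveReal

theorem isCoerciveWith_toEuclideanCLM_of_isLeast {δ : ℝ}
    (hδ : IsLeast {r : ℝ | ∃ v : E N, ‖v‖ = 1 ∧ r = (inner ℂ v (mulE A v) : ℂ).re} δ) :
    IsCoerciveWith δ (toEuclideanCLM (n := Fin N) (𝕜 := ℂ) A) :=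
  isCoerciveWith_of_forall_norm_eq_one fun v hv ↦ hδ.2 ⟨v, hv, rfl⟩

end Matrix

/-- **Convergence of sketched GMRES for Stieltjes functions of positive real
matrices** (Theorem 3.1): if `A` is positive real,
`δ = min{Re(vᴴAv) : ‖v‖=1}`, `ρ = min{Re(vᴴA⁻¹v) : ‖v‖=1}`, `S` is an
`ε`-subspace embedding for `𝒦_{m+1}(A,b)`, and for each `t ≥ 0` the vector
`x̃_m(t) ∈ 𝒦_m(A,b)` minimizes the sketched residual norm of `(tI+A)x = b`, then
the sketched GMRES approximant `f̃_m = ∫₀^∞ x̃_m(t) dμ(t)` of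
`f(A)b = ∫₀^∞ (tI+A)⁻¹b dμ(t)` satisfies
`‖f(A)b − f̃_m‖_{AᴴA} ≤ C₁ C_ε ‖b‖ (sin β₀)^m` with
`C₁ = ‖A‖ ∫₀^∞ (t+ρ‖A‖²)⁻¹ dμ(t)`, `C_ε = √((1+ε)/(1−ε))` and
`sin β₀ = √(1 − (δ/‖A‖)²)`. -/
theorem sketched_fAb_stmt0 {N s m : ℕ} (A : Matrix (Fin N) (Fin N) ℂ) (b : E N)
    (hA : IsPositiveReal A) (δ ρ : ℝ)
    (hδ : IsLeast {r : ℝ | ∃ v : E N, ‖v‖ = 1 ∧ r = (inner ℂ v (mulE A v) : ℂ).re} δ)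
    (hρ : IsLeast {r : ℝ | ∃ v : E N, ‖v‖ = 1 ∧ r = (inner ℂ v (mulE A⁻¹ v) : ℂ).re} ρ)
    (μ : MeasureTheory.Measure ℝ)
    (hμ : MeasureTheory.IntegrableOn (fun t : ℝ => (1 + t)⁻¹) (Set.Ici 0) μ)
    (ε : ℝ) (hε0 : 0 ≤ ε) (hε1 : ε < 1)
    (S : Matrix (Fin s) (Fin N) ℂ)
    (hS : IsSubspaceEmbedding S ε (Krylov A b (m + 1)))
    (xt : ℝ → E N)
    (hxt_mem : ∀ t : ℝ, 0 ≤ t → xt t ∈ Krylov A b m)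
    (hxt_min : ∀ t : ℝ, 0 ≤ t → ∀ x ∈ Krylov A b m,
      ‖mulE S (b - mulE ((t : ℂ) • (1 : Matrix (Fin N) (Fin N) ℂ) + A) (xt t))‖
        ≤ ‖mulE S (b - mulE ((t : ℂ) • (1 : Matrix (Fin N) (Fin N) ℂ) + A) x)‖)
    (hxt_int : MeasureTheory.IntegrableOn xt (Set.Ici 0) μ) :
    ‖mulE A ((∫ t in Set.Ici (0 : ℝ),
          mulE (((t : ℂ) • (1 : Matrix (Fin N) (Fin N) ℂ) + A)⁻¹) b ∂μ)
        - ∫ t in Set.Ici (0 : ℝ), xt t ∂μ)‖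
      ≤ (opNorm A * ∫ t in Set.Ici (0 : ℝ), (t + ρ * opNorm A ^ 2)⁻¹ ∂μ)
          * Real.sqrt ((1 + ε) / (1 - ε)) * ‖b‖
          * Real.sqrt (1 - (δ / opNorm A) ^ 2) ^ m := by
  have hδ_pos := hA.pos_of_isLeast hδ
  have hρ_pos := hA.inv.pos_of_isLeast hρ
  have hδA := isCoerciveWith_toEuclideanCLM_of_isLeast hδ
  have hρA := isCoerciveWith_toEuclideanCLM_of_isLeast hρ
  rw [toEuclideanCLM_inv] at hρA
  simp only [mulE_eq_toEuclideanCLM, opNorm_eq_norm_toEuclideanCLM, Krylov_eq_krylovSubspace,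
    toEuclideanCLM_inv, map_add, map_smul, map_one] at hS hxt_mem hxt_min ⊢
  exact sketched_fAb_stmt0_general hδA hδ_pos (.of_inverse (hδA.isUnit hδ_pos) hρA) hρ_pos hμ
    (sub_pos.mpr hε1) hS hxt_mem hxt_min hxt_int
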